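/- arXiv:1208.3735 — 5 statements merged into one kernel-verified Lean document; each statement's English description precedes it below -/
import Mathlib

section
/- Let X be a metric space with basepoint x₀, (Ω, p) a probability space, T : Ω → Ω an ergodic measure-preserving transformation, and g : Ω → Isom(X) a map such that ω ↦ d(Z_n(ω) x₀, x₀) is measurable for every n and ∫_Ω d(g(ω) x₀, x₀) dp(ω) < ∞, where Z_n(ω) = g(ω) ∘ g(Tω) ∘ ⋯ ∘ g(T^{n-1}ω). Then there exists a constant l ∈ [0, ∞) such that for p-almost every ω, (1/n) d(Z_n(ω) x₀, x₀) → l as n → ∞; moreover l does not depend on the choice of basepoint x₀. -/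
/-!
The distances `a n ω = dist (Z_n ω x₀) x₀` are subadditive over `T`, because `Z_n ω` is an isometry:
`a (m + n) ω ≤ a m ω + a n (T^m ω)`. The theorem is therefore Kingman's subadditive ergodic theorem
for nonnegative subadditive sequences over an ergodic map (`kingman_of_nonneg`), together with the
bound `|dist (Z x₁) x₁ - dist (Z x₀) x₀| ≤ 2 * dist x₁ x₀`, which shows that the limit does not
depend on the basepoint.

Birkhoff's theorem enters only as the following one-sided bound (`ae_bddAbove_birkhoffSum`): if
`∫ f < 0`, then almost surely the Birkhoff sums of `f` are bounded above. The event that they are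
unbounded is invariant, and if it had full measure, the maximal ergodic inequality would give
`0 ≤ ∫ f`.

For Kingman's theorem, `l` is the almost sure value of `liminf a n / n`, obtained as the threshold
of a zero-one law. For `c > l`, almost every point admits some `k ≥ 1` with `a k ≤ c * k`. The set
`B` of points having no such `k ≤ N` satisfies `∫_B a 1 → 0` as `N → ∞`. An orbit segment is split
greedily into blocks of length at most `N` on which `a k ≤ c * k`, and single steps starting in `B`
(`exists_greedy_cover`). Subadditivity then bounds `a n` by `c * n` plus the Birkhoff sum of
`a 1` restricted to `B` plus a tail of length at most `N`, so `limsup a n / n ≤ l`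
(`eventually_le_of_exists_le`).
-/

open Filter Topology MeasureTheory

/-- The cocycle `Z n ω = g ω ∘ g (T ω) ∘ ⋯ ∘ g (T^[n-1] ω)` generated by a map
`T : Ω → Ω` and a map `g : Ω → Isom(X)` into the bijective isometries of `X`. -/
noncomputable def cocycle {X Ω : Type*} [MetricSpace X] (T : Ω → Ω) (g : Ω → X ≃ᵢ X) :
    ℕ → Ω → X ≃ᵢ X
  | 0, _ => IsometryEquiv.refl X
  | n + 1, ω => (cocycle T g n (T ω)).trans (g ω)

/-! ### The maximal ergodic inequality and one-sided Birkhoff bounds -/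

section Birkhoff

variable {Ω : Type*}

/-- The maximum of the Birkhoff sums of `f` over the times `0, …, n`, in recursive form. -/
noncomputable def maxBirkhoff (T : Ω → Ω) (f : Ω → ℝ) : ℕ → Ω → ℝ
  | 0, _ => 0
  | n + 1, ω => max 0 (f ω + maxBirkhoff T f n (T ω))

variable {T : Ω → Ω} {f : Ω → ℝ}

lemma maxBirkhoff_nonneg (n : ℕ) (ω : Ω) : 0 ≤ maxBirkhoff T f n ω := by
  cases n with
  | zero => exact le_rfl
  | succ n => exact le_max_left _ _

lemma maxBirkhoff_le_succ (n : ℕ) (ω : Ω) : maxBirkhoff T f n ω ≤ maxBirkhoff T f (n + 1) ω := by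
  induction n generalizing ω with
  | zero => exact le_max_left _ _
  | succ n ih =>
    have := ih (T ω)
    exact max_le_max le_rfl (by linarith)

lemma birkhoffSum_le_maxBirkhoff (n : ℕ) (ω : Ω) : birkhoffSum T f n ω ≤ maxBirkhoff T f n ω := by
  induction n generalizing ω with
  | zero => simp [maxBirkhoff]
  | succ n ih =>
    rw [birkhoffSum_succ']
    have := ih (T ω)
    exact le_max_of_le_right (by linarith)

variable [MeasurableSpace Ω] {p : Measure Ω}

lemma measurable_maxBirkhoff (hT : Measurable T) (hf : Measurable f) (n : ℕ) :
    Measurable (maxBirkhoff T f n) := by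
  induction n with
  | zero => exact measurable_const
  | succ n ih => exact measurable_const.max (hf.add (ih.comp hT))

lemma integrable_maxBirkhoff (hT : MeasurePreserving T p p) (hf : Integrable f p) (n : ℕ) :
    Integrable (maxBirkhoff T f n) p := by
  induction n with
  | zero => exact integrable_zero _ _ _
  | succ n ih => exact (integrable_zero _ _ _).sup (hf.add (hT.integrable_comp_of_integrable ih))

lemma measurable_birkhoffSum (hT : Measurable T) (hf : Measurable f) (n : ℕ) :
    Measurable (birkhoffSum T f n) :=
  Finset.measurable_sum _ fun i _ => hf.comp (hT.iterate i)

/-- The maximal ergodic inequality. -/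
lemma setIntegral_maxBirkhoff_nonneg (hT : MeasurePreserving T p p) (hf : Measurable f)
    (hfi : Integrable f p) (n : ℕ) :
    0 ≤ ∫ ω in {ω | 0 < maxBirkhoff T f n ω}, f ω ∂p := by
  have hM := integrable_maxBirkhoff hT hfi n
  have hMT : Integrable (fun ω => maxBirkhoff T f n (T ω)) p :=
    hT.integrable_comp_of_integrable hM
  have hs : MeasurableSet {ω | 0 < maxBirkhoff T f n ω} :=
    measurableSet_lt measurable_const (measurable_maxBirkhoff hT.measurable hf n)
  have hint : ∫ ω, maxBirkhoff T f n (T ω) ∂p = ∫ ω, maxBirkhoff T f n ω ∂p := by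
    have h := integral_map (μ := p) hT.measurable.aemeasurable (f := maxBirkhoff T f n)
      (measurable_maxBirkhoff hT.measurable hf n).aestronglyMeasurable
    rw [hT.map_eq] at h
    exact h.symm
  rw [← integral_indicator hs]
  calc (0 : ℝ) = ∫ ω, (maxBirkhoff T f n ω - maxBirkhoff T f n (T ω)) ∂p := by
        rw [integral_sub hM hMT, hint, sub_self]
    _ ≤ _ := by
        refine integral_mono (hM.sub hMT) (hfi.indicator hs) fun ω => ?_
        by_cases h : 0 < maxBirkhoff T f n ω
        · rw [Set.indicator_of_mem (by exact h)]
          cases n with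
          | zero => exact absurd h (lt_irrefl 0)
          | succ n =>
            -- A positive maximum is attained at a positive time.
            have h1 : maxBirkhoff T f (n + 1) ω = f ω + maxBirkhoff T f n (T ω) := by
              rcases le_total (f ω + maxBirkhoff T f n (T ω)) 0 with h0 | h0
              · exact absurd h (by simp [maxBirkhoff, h0])
              · exact max_eq_right h0
            have := maxBirkhoff_le_succ (T := T) (f := f) n (T ω)
            change maxBirkhoff T f (n + 1) ω - maxBirkhoff T f (n + 1) (T ω) ≤ f ω
            linarith
        · rw [Set.indicator_of_notMem (by exact h)]
          have := maxBirkhoff_nonneg (T := T) (f := f) n (T ω)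
          change maxBirkhoff T f n ω - maxBirkhoff T f n (T ω) ≤ 0
          linarith [not_lt.1 h]

variable [IsProbabilityMeasure p]

/-- A one-sided form of Birkhoff's ergodic theorem. -/
lemma ae_bddAbove_birkhoffSum (hT : Ergodic T p) (hf : Measurable f) (hfi : Integrable f p)
    (hneg : ∫ ω, f ω ∂p < 0) :
    ∀ᵐ ω ∂p, ∃ C : ℝ, ∀ n : ℕ, birkhoffSum T f n ω ≤ C := by
  set E : Set Ω := {ω | ∀ C : ℕ, ∃ n : ℕ, (C : ℝ) < birkhoffSum T f n ω} with hE
  have hEm : MeasurableSet E := by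
    simp only [hE, Set.ofPred_forall, Set.ofPred_exists]
    exact .iInter fun C => .iUnion fun n =>
      measurableSet_lt measurable_const (measurable_birkhoffSum hT.measurable hf n)
  have hinv : T ⁻¹' E ⊆ E := by
    intro ω hω C
    obtain ⟨D, hD⟩ := exists_nat_ge ((C : ℝ) - f ω)
    obtain ⟨n, hn⟩ := hω D
    exact ⟨n + 1, by rw [birkhoffSum_succ']; linarith⟩
  rcases hT.ae_empty_or_univ_of_preimage_ae_le hEm.nullMeasurableSet
    hinv.eventuallyLE with h | h
  · filter_upwards [h.mem_iff] with ω hω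
    have : ω ∉ E := fun h' => hω.1 h'
    simp only [hE, Set.mem_ofPred_eq, not_forall, not_exists, not_lt] at this
    obtain ⟨C, hC⟩ := this
    exact ⟨C, hC⟩
  · exfalso
    have hlim := tendsto_setIntegral_of_monotone (μ := p) (f := f)
      (s := fun n => {ω | 0 < maxBirkhoff T f n ω})
      (fun n => measurableSet_lt measurable_const (measurable_maxBirkhoff hT.measurable hf n))
      (monotone_nat_of_le_succ fun n ω hω => lt_of_lt_of_le hω (maxBirkhoff_le_succ n ω))
      hfi.integrableOn
    have hfull : (⋃ n, {ω | 0 < maxBirkhoff T f n ω}) =ᵐ[p] Set.univ := by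
      filter_upwards [h.mem_iff] with ω hω
      obtain ⟨n, hn⟩ := (hω.2 trivial : ω ∈ E) 0
      refine eq_true (Set.mem_iUnion.2 ⟨n, ?_⟩)
      rw [Nat.cast_zero] at hn
      exact hn.trans_le (birkhoffSum_le_maxBirkhoff n ω)
    rw [setIntegral_congr_set hfull, setIntegral_univ] at hlim
    have := ge_of_tendsto' hlim fun n =>
      setIntegral_maxBirkhoff_nonneg hT.toMeasurePreserving hf hfi n
    linarith

lemma ae_birkhoffSum_le (hT : Ergodic T p) (hf : Measurable f) (hfi : Integrable f p) {c : ℝ}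
    (hc : ∫ ω, f ω ∂p < c) :
    ∀ᵐ ω ∂p, ∃ C : ℝ, ∀ n : ℕ, birkhoffSum T f n ω ≤ c * n + C := by
  have h := ae_bddAbove_birkhoffSum hT (f := fun ω => f ω - c) (hf.sub measurable_const)
    (hfi.sub (integrable_const c))
    (by rw [integral_sub hfi (integrable_const c)]; simpa using hc)
  filter_upwards [h] with ω ⟨C, hC⟩
  refine ⟨C, fun n => ?_⟩
  have := hC n
  simp only [birkhoffSum, Finset.sum_sub_distrib, Finset.sum_const, Finset.card_range,
    nsmul_eq_mul] at this
  simp only [birkhoffSum]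
  linarith [mul_comm c (n : ℝ)]

end Birkhoff

/-! ### Nonnegative subadditive sequences -/

section Kingman

variable {Ω : Type*} {T : Ω → Ω} {a : ℕ → Ω → ℝ}

lemma subadditive_le_birkhoffSum (h0 : ∀ ω, a 0 ω = 0)
    (hsub : ∀ m n ω, a (m + n) ω ≤ a m ω + a n (T^[m] ω)) (n : ℕ) (ω : Ω) :
    a n ω ≤ birkhoffSum T (a 1) n ω := by
  induction n with
  | zero => simp [h0]
  | succ n ih =>
    rw [birkhoffSum_succ]
    linarith [hsub n 1 ω]

/-- The points from which no block of length at most `N` has average at most `c`. -/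
def badSet (a : ℕ → Ω → ℝ) (c : ℝ) (N : ℕ) : Set Ω :=
  {ω | ∀ k : ℕ, 1 ≤ k → k ≤ N → c * k < a k ω}

/-- The greedy decomposition of an orbit segment of length `m` into blocks of average at most `c`
and single bad steps. The end `m` of the last complete block is within `N` of the prescribed time
`n`. -/
lemma exists_greedy_cover (h0 : ∀ ω, a 0 ω = 0)
    (hnn : ∀ n ω, 0 ≤ a n ω)
    (hsub : ∀ m n ω, a (m + n) ω ≤ a m ω + a n (T^[m] ω)) {c : ℝ} (hc : 0 ≤ c) {N : ℕ}
    (hN : 1 ≤ N) (ω : Ω) (n : ℕ) :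
    ∃ m : ℕ, m ≤ n ∧ n < m + N ∧
      a m ω ≤ c * m + birkhoffSum T ((badSet a c N).indicator (a 1)) m ω := by
  have hb : ∀ ω, 0 ≤ (badSet a c N).indicator (a 1) ω :=
    fun ω => Set.indicator_nonneg (fun ω _ => hnn 1 ω) ω
  induction n with
  | zero => exact ⟨0, le_rfl, by omega, by simp [h0]⟩
  | succ n ih =>
    obtain ⟨m, hmn, hnm, hm⟩ := ih
    by_cases hlt : n + 1 < m + N
    · exact ⟨m, by omega, hlt, hm⟩
    by_cases hbad : T^[m] ω ∈ badSet a c N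
    · refine ⟨m + 1, by omega, by omega, ?_⟩
      rw [birkhoffSum_succ, Set.indicator_of_mem hbad]
      push_cast
      linarith [hsub m 1 ω]
    · simp only [badSet, Set.mem_ofPred_eq, not_forall, not_lt] at hbad
      obtain ⟨k, hk1, hkN, hk⟩ := hbad
      refine ⟨m + k, by omega, by omega, ?_⟩
      have h1 : 0 ≤ birkhoffSum T ((badSet a c N).indicator (a 1)) k (T^[m] ω) :=
        Finset.sum_nonneg fun i _ => hb _
      rw [birkhoffSum_add]
      push_cast
      linarith [hsub m k ω]

variable [MeasurableSpace Ω] {p : Measure Ω} [IsProbabilityMeasure p]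

lemma measurableSet_badSet (hm : ∀ n, Measurable (a n)) (c : ℝ) (N : ℕ) :
    MeasurableSet (badSet a c N) := by
  simp only [badSet, Set.ofPred_forall]
  exact .iInter fun k => .iInter fun _ => .iInter fun _ =>
    measurableSet_lt measurable_const (hm k)

/-- If almost every point starts some block of average at most `c`, then the whole sequence
eventually has average at most any `c' > c`. -/
lemma eventually_le_of_exists_le (hT : Ergodic T p) (hm : ∀ n, Measurable (a n))
    (hint : Integrable (a 1) p) (h0 : ∀ ω, a 0 ω = 0) (hnn : ∀ n ω, 0 ≤ a n ω)
    (hsub : ∀ m n ω, a (m + n) ω ≤ a m ω + a n (T^[m] ω)) {c c' : ℝ} (hc : 0 ≤ c) (hcc : c < c')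
    (hex : ∀ᵐ ω ∂p, ∃ k : ℕ, 1 ≤ k ∧ a k ω ≤ c * k) :
    ∀ᵐ ω ∂p, ∀ᶠ n : ℕ in atTop, a n ω ≤ c' * n := by
  obtain ⟨ε, hε, rfl⟩ : ∃ ε : ℝ, 0 < ε ∧ c' = c + 4 * ε :=
    ⟨(c' - c) / 4, by linarith, by ring⟩
  obtain ⟨N, hN1, hN⟩ : ∃ N : ℕ, 1 ≤ N ∧ ∫ ω in badSet a c N, a 1 ω ∂p < ε := by
    have hlim := tendsto_setIntegral_of_antitone (μ := p) (f := a 1) (s := badSet a c)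
      (measurableSet_badSet hm c) (fun M N hMN ω hω k h1 hk => hω k h1 (hk.trans hMN))
      ⟨0, hint.integrableOn⟩
    have hnull : p (⋂ N, badSet a c N) = 0 := by
      refine measure_mono_null ?_ hex
      rintro ω hω ⟨k, hk1, hk⟩
      exact absurd hk (not_le.2 (Set.mem_iInter.1 hω k k hk1 le_rfl))
    rw [setIntegral_measure_zero _ hnull] at hlim
    obtain ⟨N, h1, h2⟩ := ((hlim.eventually (gt_mem_nhds hε)).and (eventually_ge_atTop 1)).exists
    exact ⟨N, h2, h1⟩
  set b := (badSet a c N).indicator (a 1) with hbdef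
  have hbm := measurableSet_badSet hm c N
  set A := ∫ ω, a 1 ω ∂p with hA
  have hA0 : 0 ≤ A := integral_nonneg (hnn 1)
  have hb := ae_birkhoffSum_le hT ((hm 1).indicator hbm) (hint.indicator hbm)
    (by rwa [integral_indicator hbm])
  have hup := ae_birkhoffSum_le hT (hm 1) hint (c := A + ε) (by linarith)
  have hlow := ae_birkhoffSum_le hT (f := -a 1) (hm 1).neg hint.neg (c := -A + ε)
    (by simp only [Pi.neg_apply, integral_neg]; linarith)
  filter_upwards [hb, hup, hlow] with ω ⟨C₁, h₁⟩ ⟨C₂, h₂⟩ ⟨C₃, h₃⟩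
  filter_upwards [eventually_ge_atTop ⌈(A * N + C₁ + C₂ + C₃) / ε⌉₊] with n hn
  have hn' : A * N + C₁ + C₂ + C₃ ≤ n * ε := by
    rw [← div_le_iff₀ hε]
    exact Nat.ceil_le.1 hn
  obtain ⟨m, hmn, hnm, hma⟩ := exists_greedy_cover h0 hnn hsub hc hN1 ω n
  obtain ⟨r, rfl⟩ := Nat.exists_eq_add_of_le hmn
  have hrN : (r : ℝ) ≤ N := by exact_mod_cast (by omega : r ≤ N)
  have hr0 : (0 : ℝ) ≤ r := r.cast_nonneg
  have e1 := hsub m r ω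
  have e2 := subadditive_le_birkhoffSum h0 hsub r (T^[m] ω)
  have e3 := birkhoffSum_add T (a 1) m r ω
  have e4 := h₁ m
  have e5 := h₂ (m + r)
  have e6 := h₃ m
  rw [birkhoffSum_neg] at e6
  have e7 : A * r ≤ A * N := mul_le_mul_of_nonneg_left hrN hA0
  have e8 : 0 ≤ c * r := mul_nonneg hc hr0
  have e9 : 0 ≤ ε * r := mul_nonneg hε.le hr0
  push_cast at e5 hn' ⊢
  linarith

/-- The points where `liminf a n / n ≤ c`. The inequality is stated with the countably many margins
`1 / (k + 1)`, so that the set is measurable and contains its preimage under `T`. -/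
def lowSet (a : ℕ → Ω → ℝ) (c : ℝ) : Set Ω :=
  {ω | ∀ k : ℕ, ∃ᶠ n : ℕ in atTop, a n ω ≤ (c + 1 / ((k : ℝ) + 1)) * n}

lemma lowSet_zero_one (hT : Ergodic T p) (hm : ∀ n, Measurable (a n))
    (hsub : ∀ m n ω, a (m + n) ω ≤ a m ω + a n (T^[m] ω)) (c : ℝ) :
    (∀ᵐ ω ∂p, ω ∈ lowSet a c) ∨ ∀ᵐ ω ∂p, ω ∉ lowSet a c := by
  have hmeas : MeasurableSet (lowSet a c) := by
    simp only [lowSet, frequently_atTop, Set.ofPred_forall, Set.ofPred_exists, Set.ofPred_and]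
    exact .iInter fun k => .iInter fun M => .iUnion fun n =>
      (MeasurableSet.const _).inter (measurableSet_le (hm n) measurable_const)
  have hinv : T ⁻¹' lowSet a c ⊆ lowSet a c := by
    intro ω hω k
    obtain ⟨δ, hδ, hδk⟩ : ∃ δ : ℝ, 0 < δ ∧ 1 / (((k + 1 : ℕ) : ℝ) + 1) + δ = 1 / ((k : ℝ) + 1) :=
      ⟨1 / ((k : ℝ) + 1) - 1 / (((k + 1 : ℕ) : ℝ) + 1), by
        rw [sub_pos]
        exact one_div_lt_one_div_of_lt (by positivity) (by push_cast; linarith), by ring⟩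
    set d := c + 1 / (((k + 1 : ℕ) : ℝ) + 1)
    have hd : c + 1 / ((k : ℝ) + 1) = d + δ := by rw [← hδk]; ring
    rw [hd]
    -- The step from `T ω` to `ω` costs `a 1 ω - d - δ`, which `δ * n` absorbs for large `n`.
    have hfr := (hω (k + 1)).and_eventually
      (eventually_ge_atTop ⌈(a 1 ω - d - δ) / δ⌉₊)
    refine (tendsto_add_atTop_nat 1).frequently (hfr.mono ?_)
    rintro n ⟨h1, h2⟩
    have h3 : a 1 ω - d - δ ≤ n * δ := by
      rw [← div_le_iff₀ hδ]
      exact Nat.ceil_le.1 h2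
    have h4 := hsub 1 n ω
    rw [Function.iterate_one, add_comm 1 n] at h4
    change a n (T ω) ≤ d * n at h1
    push_cast
    linarith
  rcases hT.ae_empty_or_univ_of_preimage_ae_le hmeas.nullMeasurableSet
    hinv.eventuallyLE with h | h
  · exact .inr (h.mem_iff.mono fun ω hω h' => hω.1 h')
  · exact .inl (h.mem_iff.mono fun ω hω => hω.2 trivial)

/-- Kingman's subadditive ergodic theorem for nonnegative sequences over an ergodic map. -/
theorem kingman_of_nonneg (hT : Ergodic T p) (hm : ∀ n, Measurable (a n))
    (hint : Integrable (a 1) p) (h0 : ∀ ω, a 0 ω = 0) (hnn : ∀ n ω, 0 ≤ a n ω)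
    (hsub : ∀ m n ω, a (m + n) ω ≤ a m ω + a n (T^[m] ω)) :
    ∃ l : ℝ, 0 ≤ l ∧ ∀ᵐ ω ∂p, Tendsto (fun n : ℕ => a n ω / n) atTop (𝓝 l) := by
  set S : Set ℝ := {c | ∀ᵐ ω ∂p, ω ∈ lowSet a c} with hS
  have hSnn : ∀ c ∈ S, 0 ≤ c := by
    intro c hc
    by_contra! hneg
    have hae : ∀ᵐ ω ∂p, ω ∈ lowSet a c := hc
    obtain ⟨ω, hω⟩ := hae.exists
    obtain ⟨k, hk⟩ := exists_nat_one_div_lt (neg_pos.2 hneg)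
    obtain ⟨n, hn, hn1⟩ := ((hω k).and_eventually (eventually_ge_atTop 1)).exists
    have hn1' : (0 : ℝ) < n := by exact_mod_cast hn1
    have := mul_neg_of_neg_of_pos (by linarith : c + 1 / ((k : ℝ) + 1) < 0) hn1'
    linarith [hnn n ω]
  have hbdd : BddBelow S := ⟨0, hSnn⟩
  have hne : S.Nonempty := by
    refine ⟨∫ ω, a 1 ω ∂p + 1, ?_⟩
    filter_upwards [ae_birkhoffSum_le hT (hm 1) hint (lt_add_one _)] with ω ⟨C, hC⟩ k
    refine Eventually.frequently ?_
    have hk : (0 : ℝ) < 1 / ((k : ℝ) + 1) := by positivity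
    filter_upwards [eventually_ge_atTop ⌈C / (1 / ((k : ℝ) + 1))⌉₊] with n hn
    have h3 : C ≤ n * (1 / ((k : ℝ) + 1)) := by
      rw [← div_le_iff₀ hk]
      exact Nat.ceil_le.1 hn
    linarith [hC n, subadditive_le_birkhoffSum h0 hsub n ω]
  set l := sInf S with hl
  have hl0 : 0 ≤ l := le_csInf hne hSnn
  refine ⟨l, hl0, ?_⟩
  have hupper : ∀ j : ℕ, ∀ᵐ ω ∂p, ∀ᶠ n : ℕ in atTop, a n ω ≤ (l + 1 / ((j : ℝ) + 1)) * n := by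
    intro j
    have hj : (0 : ℝ) < 1 / ((j : ℝ) + 1) := by positivity
    obtain ⟨c, hcS, hc⟩ := exists_lt_of_csInf_lt hne (by linarith : l < l + 1 / ((j : ℝ) + 1) / 2)
    obtain ⟨k, hk⟩ := exists_nat_one_div_lt (half_pos hj)
    have hc0 := hSnn c hcS
    have hk0 : (0 : ℝ) < 1 / ((k : ℝ) + 1) := by positivity
    refine eventually_le_of_exists_le hT hm hint h0 hnn hsub
      (c := c + 1 / ((k : ℝ) + 1)) (by linarith) (by linarith) ?_
    filter_upwards [hcS] with ω hω
    obtain ⟨n, hn, hn1⟩ := ((hω k).and_eventually (eventually_ge_atTop 1)).exists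
    exact ⟨n, hn1, hn⟩
  have hlower : ∀ j : ℕ, ∀ᵐ ω ∂p, ∀ᶠ n : ℕ in atTop, (l - 1 / ((j : ℝ) + 1)) * n < a n ω := by
    intro j
    have hj : (0 : ℝ) < 1 / ((j : ℝ) + 1) := by positivity
    have hnot : l - 1 / ((j : ℝ) + 1) ∉ S := fun h => by linarith [csInf_le hbdd h]
    filter_upwards [(lowSet_zero_one hT hm hsub (l - 1 / ((j : ℝ) + 1))).resolve_left hnot]
      with ω hω
    simp only [lowSet, Set.mem_ofPred_eq, not_forall, not_frequently, not_le] at hω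
    obtain ⟨k, hk⟩ := hω
    filter_upwards [hk] with n hn
    have : (0 : ℝ) ≤ 1 / ((k : ℝ) + 1) * n := by positivity
    linarith
  filter_upwards [ae_all_iff.2 hupper, ae_all_iff.2 hlower] with ω hu hlo
  rw [Metric.tendsto_atTop']
  intro ε hε
  obtain ⟨j, hj⟩ := exists_nat_one_div_lt hε
  obtain ⟨M, hM⟩ := eventually_atTop.1 ((hu j).and (hlo j))
  refine ⟨M, fun n hn => ?_⟩
  obtain ⟨h1, h2⟩ := hM n hn.le
  have hn0 : (0 : ℝ) < n := by exact_mod_cast (Nat.zero_le M).trans_lt hn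
  rw [Real.dist_eq, abs_lt]
  have h1' := (div_le_iff₀ hn0).2 h1
  have h2' := (lt_div_iff₀ hn0).2 h2
  constructor <;> linarith

end Kingman

/-! ### Cocycles of isometries -/

section Cocycle

variable {X Ω : Type*} [MetricSpace X] {T : Ω → Ω} {g : Ω → X ≃ᵢ X}

lemma cocycle_add (m n : ℕ) (ω : Ω) (x : X) :
    cocycle T g (m + n) ω x = cocycle T g m ω (cocycle T g n (T^[m] ω) x) := by
  induction m generalizing ω with
  | zero => rw [Nat.zero_add]; rfl
  | succ m ih =>
    rw [Nat.succ_add]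
    simp only [cocycle, IsometryEquiv.trans_apply, ih, Function.iterate_succ_apply]

lemma dist_cocycle_add_le (x : X) (m n : ℕ) (ω : Ω) :
    dist (cocycle T g (m + n) ω x) x ≤
      dist (cocycle T g m ω x) x + dist (cocycle T g n (T^[m] ω) x) x := by
  rw [cocycle_add, add_comm (dist (cocycle T g m ω x) x)]
  refine (dist_triangle _ (cocycle T g m ω x) _).trans_eq ?_
  rw [IsometryEquiv.dist_eq]

lemma abs_dist_isometry_sub_le (e : X ≃ᵢ X) (x y : X) :
    |dist (e x) x - dist (e y) y| ≤ 2 * dist x y := by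
  have h := dist_dist_dist_le (e x) x (e y) y
  rw [e.dist_eq, Real.dist_eq] at h
  linarith

end Cocycle

/-- For an integrable ergodic cocycle of isometries, `(1/n) d(Z_n(ω) x₀, x₀)` converges
almost surely to a constant `l ≥ 0`, and `l` does not depend on the basepoint. -/
theorem cocycle_drift_exists {X Ω : Type*} [MetricSpace X] (x₀ : X)
    [MeasurableSpace Ω] (p : Measure Ω) [IsProbabilityMeasure p]
    (T : Ω → Ω) (hT : Ergodic T p) (g : Ω → X ≃ᵢ X)
    (hmeas : ∀ n : ℕ, Measurable fun ω => dist (cocycle T g n ω x₀) x₀)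
    (hint : Integrable (fun ω => dist (g ω x₀) x₀) p) :
    ∃ l : ℝ, 0 ≤ l ∧
      (∀ᵐ ω ∂p, Tendsto (fun n : ℕ => dist (cocycle T g n ω x₀) x₀ / n) atTop (𝓝 l)) ∧
      ∀ x₁ : X, ∀ᵐ ω ∂p,
        Tendsto (fun n : ℕ => dist (cocycle T g n ω x₁) x₁ / n) atTop (𝓝 l) := by
  obtain ⟨l, hl, hlim⟩ := kingman_of_nonneg hT (a := fun n ω => dist (cocycle T g n ω x₀) x₀)
    hmeas hint (fun ω => dist_self x₀) (fun _ _ => dist_nonneg)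
    (fun m n ω => dist_cocycle_add_le x₀ m n ω)
  refine ⟨l, hl, hlim, fun x₁ => ?_⟩
  filter_upwards [hlim] with ω hω
  have hdiff : Tendsto (fun n : ℕ => dist (cocycle T g n ω x₁) x₁ / n -
      dist (cocycle T g n ω x₀) x₀ / n) atTop (𝓝 0) := by
    refine squeeze_zero_norm (fun n => ?_) (tendsto_const_div_atTop_nhds_zero_nat (2 * dist x₁ x₀))
    rw [← sub_div, Real.norm_eq_abs, abs_div, Nat.abs_cast]
    gcongr
    exact abs_dist_isometry_sub_le _ x₁ x₀
  simpa using hdiff.add hω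
end

section
/- Let X be a metric space, f : X → X a 1-Lipschitz map, x₀ ∈ X, and l = lim_{n→∞} (1/n) d(x₀, f^n x₀) the drift of f. Then for every ε > 0 there exist infinitely many n ≥ 1 such that d(x₀, f^n x₀) − d(x₀, f^{n−k} x₀) ≥ (l − ε) k for every integer k with 1 ≤ k ≤ n. -/
/-!
Put `b n = d(x₀, f^n x₀) − (l − ε) n`. Since `b n / n → ε > 0`, the sequence `b` tends to `+∞`, so
it has infinitely many record times `n`, at which `b m < b n` for every `m < n`
(`Filter.frequently_high_scores`). With `m = n − k` this is the required inequality.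
-/

open Filter Topology

/-- Let `f` be 1-Lipschitz with drift `l = lim (1/n) d(x₀, f^n x₀)`. For every `ε > 0`
there are infinitely many `n ≥ 1` such that
`d(x₀, f^n x₀) − d(x₀, f^{n−k} x₀) ≥ (l − ε) k` for all `1 ≤ k ≤ n`. -/
theorem frequently_good_times {X : Type*} [MetricSpace X] (f : X → X)
    (hf : LipschitzWith 1 f) (x₀ : X) (l : ℝ)
    (hl : Tendsto (fun n : ℕ => dist x₀ (f^[n] x₀) / n) atTop (𝓝 l))
    (ε : ℝ) (hε : 0 < ε) :
    ∃ᶠ n : ℕ in atTop, 1 ≤ n ∧ ∀ k : ℕ, 1 ≤ k → k ≤ n →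
      dist x₀ (f^[n] x₀) - dist x₀ (f^[n - k] x₀) ≥ (l - ε) * k := by
  have hb : Tendsto (fun n : ℕ => dist x₀ (f^[n] x₀) - (l - ε) * n) atTop atTop := by
    have hslope : Tendsto (fun n : ℕ => dist x₀ (f^[n] x₀) / n - (l - ε)) atTop (𝓝 ε) := by
      simpa using hl.sub_const (l - ε)
    refine (hslope.pos_mul_atTop hε tendsto_natCast_atTop_atTop).congr' ?_
    filter_upwards [eventually_ge_atTop 1] with n hn
    have hn' : (n : ℝ) ≠ 0 := by positivity
    field_simp
  refine ((frequently_high_scores hb).and_eventually (eventually_ge_atTop 1)).mono ?_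
  rintro n ⟨hrec, hn⟩
  refine ⟨hn, fun k hk hkn => ?_⟩
  have h := hrec (n - k) (by omega)
  rw [Nat.cast_sub hkn] at h
  linarith
end

section
/- Let X be a metric space, f : X → X a 1-Lipschitz map, x₀ ∈ X, and l = lim_{n→∞} (1/n) d(x₀, f^n x₀) the drift of f. Then there exists a 1-Lipschitz function h : X → ℝ with h(x₀) = 0 such that h(f^k x₀) ≤ −l·k for every integer k ≥ 0. -/
/-!
Write `a n = dist x₀ (f^[n] x₀)`. For `ε > 0` the sequence `a n - (l - ε) n` tends to infinity, so
it has arbitrarily late record times `n`. At a record time, `a (n - k) - a n ≤ -(l - ε) k` for all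
`k ≤ n`, and since `f^[k]` is nonexpansive the Busemann-type function
`x ↦ dist x (f^[n] x₀) - dist x₀ (f^[n] x₀)` is at most `a (n - k) - a n` at `f^[k] x₀`.
These functions are 1-Lipschitz, vanish at `x₀`, and are bounded at each `x` by `dist x x₀`. Letting
`ε → 0` and `n → ∞` along a nonprincipal ultrafilter, a pointwise limit exists and has all the
required properties.
-/

open Filter Topology

/-- Record times of `a n - (l - ε) n` occur arbitrarily late. -/
lemma exists_record_time {a : ℕ → ℝ} {l ε : ℝ} (hε : 0 < ε)
    (hl : Tendsto (fun n : ℕ => a n / n) atTop (𝓝 l)) (N : ℕ) :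
    ∃ n, N ≤ n ∧ ∀ k < n, a k - (l - ε) * k < a n - (l - ε) * n := by
  have h1 : Tendsto (fun n : ℕ => a n / n - (l - ε)) atTop (𝓝 ε) := by
    simpa using hl.sub_const (l - ε)
  have h2 : Tendsto (fun n : ℕ => a n - (l - ε) * n) atTop atTop := by
    refine (h1.pos_mul_atTop hε tendsto_natCast_atTop_atTop).congr' ?_
    filter_upwards [eventually_gt_atTop 0] with n hn
    have : (n : ℝ) ≠ 0 := by positivity
    field_simp
  exact frequently_atTop.1 (frequently_high_scores h2) N

/-- A sequence of 1-Lipschitz functions vanishing at `x₀` has a pointwise limit along any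
ultrafilter. -/
lemma exists_ultrafilter_limit {X : Type*} [MetricSpace X] (U : Ultrafilter ℕ) (x₀ : X)
    (g : ℕ → X → ℝ) (hg : ∀ i, LipschitzWith 1 (g i)) (hg₀ : ∀ i, g i x₀ = 0) :
    ∃ h : X → ℝ, ∀ x, Tendsto (fun i => g i x) U (𝓝 (h x)) := by
  have key : ∀ x, ∃ y, Tendsto (fun i => g i x) U (𝓝 y) := by
    intro x
    have hmem : ∀ i, g i x ∈ Metric.closedBall (0 : ℝ) (dist x x₀) := by
      intro i
      simpa [hg₀ i] using (hg i).dist_le_mul x x₀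
    obtain ⟨y, -, hy⟩ := (isCompact_closedBall (0 : ℝ) (dist x x₀)).ultrafilter_le_nhds
      (U.map fun i => g i x) (le_principal_iff.2 (mem_map.2 (Eventually.of_forall hmem)))
    exact ⟨y, hy⟩
  choose h hh using key
  exact ⟨h, hh⟩

/-- Let `f` be 1-Lipschitz with drift `l = lim (1/n) d(x₀, f^n x₀)`. There exists a
metric functional `h` based at `x₀` (1-Lipschitz with `h x₀ = 0`) such that
`h(f^k x₀) ≤ −l·k` for every `k ≥ 0`. -/
theorem exists_metric_functional_orbit {X : Type*} [MetricSpace X] (f : X → X)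
    (hf : LipschitzWith 1 f) (x₀ : X) (l : ℝ)
    (hl : Tendsto (fun n : ℕ => dist x₀ (f^[n] x₀) / n) atTop (𝓝 l)) :
    ∃ h : X → ℝ, LipschitzWith 1 h ∧ h x₀ = 0 ∧
      ∀ k : ℕ, h (f^[k] x₀) ≤ -(l * k) := by
  have hrec (i : ℕ) := exists_record_time (ε := 1 / ((i : ℝ) + 1)) (by positivity) hl i
  choose n hn hrec using hrec
  let g : ℕ → X → ℝ := fun i x => dist x (f^[n i] x₀) - dist x₀ (f^[n i] x₀)
  have hg : ∀ i, LipschitzWith 1 (g i) := by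
    intro i
    refine LipschitzWith.of_le_add fun x y => ?_
    have := dist_triangle x y (f^[n i] x₀)
    simp only [g]
    linarith
  obtain ⟨h, hh⟩ := exists_ultrafilter_limit (hyperfilter ℕ) x₀ g hg fun i => sub_self _
  have hle : (hyperfilter ℕ : Filter ℕ) ≤ atTop := Nat.hyperfilter_le_atTop
  refine ⟨h, LipschitzWith.of_le_add fun x y => ?_, ?_, fun k => ?_⟩
  · refine le_of_tendsto_of_tendsto' (hh x) ((hh y).add_const _) fun i => ?_
    have := (hg i).le_add_mul x y
    simpa using this
  · refine tendsto_nhds_unique (hh x₀) ?_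
    simp [g]
  · have hlim : Tendsto (fun i : ℕ => -((l - 1 / ((i : ℝ) + 1)) * k)) (hyperfilter ℕ)
        (𝓝 (-(l * k))) := by
      have h0 : Tendsto (fun i : ℕ => 1 / ((i : ℝ) + 1)) atTop (𝓝 0) :=
        tendsto_one_div_add_atTop_nhds_zero_nat
      simpa using (((h0.const_sub l).mul_const (k : ℝ)).neg).mono_left hle
    refine le_of_tendsto_of_tendsto (hh _) hlim ?_
    filter_upwards [hle (eventually_ge_atTop k)] with i hi
    have hk : k ≤ n i := hi.trans (hn i)
    have hcontr : dist (f^[k] x₀) (f^[n i] x₀) ≤ dist x₀ (f^[n i - k] x₀) := by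
      have := (hf.iterate k).dist_le_mul x₀ (f^[n i - k] x₀)
      rw [← Function.iterate_add_apply, Nat.add_sub_cancel' hk] at this
      simpa using this
    -- The record property is strict, so `k = 0` is separate.
    rcases Nat.eq_zero_or_pos k with rfl | hpos
    · simp [g]
    · have := hrec i (n i - k) (by omega)
      rw [Nat.cast_sub hk] at this
      simp only [g]
      linarith
end

section
/- Let X be a metric space, f : X → X a 1-Lipschitz map, x₀ ∈ X, and l = lim_{n→∞} (1/n) d(x₀, f^n x₀) the drift of f. Then there exists a 1-Lipschitz function h : X → ℝ with h(x₀) = 0 such that h(f(y)) ≤ h(y) − l for every y ∈ X. -/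
/-!
Take the infimal convolution along the orbit
`g x = inf_k (d(x, f^k x₀) - k l)`, normalised to `h = g - g x₀`.
Each function in the infimum is 1-Lipschitz, and since `f` is nonexpansive the `(k+1)`-st one at
`f y` is at most the `k`-th one at `y` minus `l`; hence `g (f y) ≤ g y - l`.
The infimum is finite because, by Fekete's lemma, the drift is an infimum:
`k l ≤ d(x₀, f^k x₀)`, so that `d(x, f^k x₀) - k l ≥ -d(x₀, x)`.
-/

open Filter Topology

/-- By subadditivity the drift is a lower bound for all the quotients `d(x₀, f^k x₀) / k`. -/
theorem drift_mul_le_dist {X : Type*} [MetricSpace X] (f : X → X)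
    (hf : LipschitzWith 1 f) (x₀ : X) (l : ℝ)
    (hl : Tendsto (fun n : ℕ => dist x₀ (f^[n] x₀) / n) atTop (𝓝 l)) (k : ℕ) :
    k * l ≤ dist x₀ (f^[k] x₀) := by
  rcases Nat.eq_zero_or_pos k with rfl | hk
  · simp
  have hsub : Subadditive (fun n : ℕ => dist x₀ (f^[n] x₀)) := by
    intro m n
    have h1 : dist (f^[m] x₀) (f^[m] (f^[n] x₀)) ≤ dist x₀ (f^[n] x₀) := by
      simpa using (hf.iterate m).dist_le_mul x₀ (f^[n] x₀)
    have h2 := dist_triangle x₀ (f^[m] x₀) (f^[m] (f^[n] x₀))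
    simp only [Function.iterate_add_apply]
    linarith
  have hbdd : BddBelow (Set.range fun n : ℕ => dist x₀ (f^[n] x₀) / n) :=
    ⟨0, by rintro _ ⟨n, rfl⟩; positivity⟩
  have hlim : l = hsub.lim := tendsto_nhds_unique hl (hsub.tendsto_lim hbdd)
  have h := hsub.lim_le_div hbdd hk.ne'
  rw [← hlim, le_div_iff₀ (by exact_mod_cast hk)] at h
  linarith

/-- Let `f` be 1-Lipschitz with drift `l = lim (1/n) d(x₀, f^n x₀)`. There exists a
metric functional `h` based at `x₀` (1-Lipschitz with `h x₀ = 0`) such that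
`h(f y) ≤ h(y) − l` for every `y ∈ X`. -/
theorem exists_metric_functional_decreasing {X : Type*} [MetricSpace X] (f : X → X)
    (hf : LipschitzWith 1 f) (x₀ : X) (l : ℝ)
    (hl : Tendsto (fun n : ℕ => dist x₀ (f^[n] x₀) / n) atTop (𝓝 l)) :
    ∃ h : X → ℝ, LipschitzWith 1 h ∧ h x₀ = 0 ∧
      ∀ y : X, h (f y) ≤ h y - l := by
  have hbdd : ∀ x, BddBelow (Set.range fun k : ℕ => dist x (f^[k] x₀) - k * l) := by
    intro x
    refine ⟨-dist x₀ x, ?_⟩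
    rintro _ ⟨k, rfl⟩
    have h1 := drift_mul_le_dist f hf x₀ l hl k
    have h2 := dist_triangle x₀ x (f^[k] x₀)
    dsimp only
    linarith
  let g : X → ℝ := fun x => ⨅ k : ℕ, (dist x (f^[k] x₀) - k * l)
  have hg : ∀ x (k : ℕ), g x ≤ dist x (f^[k] x₀) - k * l := fun x k => ciInf_le (hbdd x) k
  refine ⟨fun x => g x - g x₀, LipschitzWith.of_le_add fun x y => ?_, sub_self _, fun y => ?_⟩
  · have : g x - dist x y ≤ g y := le_ciInf fun k => by
      have h1 := hg x k
      have h2 := dist_triangle x y (f^[k] x₀)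
      linarith
    linarith
  · have : g (f y) + l ≤ g y := le_ciInf fun k => by
      have h1 := hg (f y) (k + 1)
      have h2 : dist (f y) (f (f^[k] x₀)) ≤ dist y (f^[k] x₀) := by
        simpa using hf.dist_le_mul y (f^[k] x₀)
      rw [Function.iterate_succ_apply'] at h1
      push_cast at h1
      linarith
    linarith
end

section
/- Let X be a metric space, f : X → X a 1-Lipschitz map, x₀ ∈ X, and l = lim_{n→∞} (1/n) d(x₀, f^n x₀) the drift of f. Then there exist a strictly increasing sequence of positive integers (n_i) and a sequence ε_i ↓ 0 such that for every i and every integer k with 1 ≤ k ≤ n_i, d(x₀, f^{n_i} x₀) − d(x₀, f^{n_i − k} x₀) ≥ (l − ε_i) k; in particular d(x₀, f^{n_i − 1} x₀) − d(x₀, f^{n_i} x₀) ≤ −(l − ε_i) for every i. -/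
/-!
Write `a n = dist x₀ (f^[n] x₀)`. For every `δ > 0` the sequence `a n - (l - δ) n` grows like `δ n`,
so it tends to infinity and hence takes infinitely many record values
(`Filter.frequently_high_scores`). At a record time `n`, comparison with the earlier time `n - k`
says exactly that `a n - a (n - k) > (l - δ) k`. Choosing a record time for each
`δ = 1 / (i + 1)`, in increasing order, gives the result.
-/

open Filter Topology

theorem tendsto_sub_mul_atTop_of_tendsto_div {a : ℕ → ℝ} {l c : ℝ}
    (hl : Tendsto (fun n : ℕ => a n / n) atTop (𝓝 l)) (hc : c < l) :
    Tendsto (fun n : ℕ => a n - c * n) atTop atTop := by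
  have h1 : Tendsto (fun n : ℕ => (n : ℝ) * (a n / n - c)) atTop atTop :=
    tendsto_natCast_atTop_atTop.atTop_mul_pos (sub_pos.2 hc) (hl.sub_const c)
  refine h1.congr' ?_
  filter_upwards [eventually_gt_atTop 0] with n hn
  have : (n : ℝ) ≠ 0 := by positivity
  field_simp

/-- Let `f` be 1-Lipschitz with drift `l = lim (1/n) d(x₀, f^n x₀)`. There are a strictly
increasing sequence of positive integers `(n_i)` and a sequence `ε_i ↓ 0` such that for
every `i` and every `1 ≤ k ≤ n_i`,
`d(x₀, f^{n_i} x₀) − d(x₀, f^{n_i − k} x₀) ≥ (l − ε_i) k`; in particular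
`d(x₀, f^{n_i − 1} x₀) − d(x₀, f^{n_i} x₀) ≤ −(l − ε_i)`. -/
theorem exists_good_times_with_eps {X : Type*} [MetricSpace X] (f : X → X)
    (hf : LipschitzWith 1 f) (x₀ : X) (l : ℝ)
    (hl : Tendsto (fun n : ℕ => dist x₀ (f^[n] x₀) / n) atTop (𝓝 l)) :
    ∃ ni : ℕ → ℕ, ∃ ε : ℕ → ℝ,
      StrictMono ni ∧ (∀ i, 0 < ni i) ∧
      (∀ i, 0 < ε i) ∧ Antitone ε ∧ Tendsto ε atTop (𝓝 0) ∧
      (∀ i, ∀ k : ℕ, 1 ≤ k → k ≤ ni i →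
        dist x₀ (f^[ni i] x₀) - dist x₀ (f^[ni i - k] x₀) ≥ (l - ε i) * k) ∧
      ∀ i, dist x₀ (f^[ni i - 1] x₀) - dist x₀ (f^[ni i] x₀) ≤ -(l - ε i) := by
  have key : ∀ i : ℕ, ∃ᶠ n in atTop, (∀ m < n,
      dist x₀ (f^[m] x₀) - (l - 1 / ((i : ℝ) + 1)) * m
        < dist x₀ (f^[n] x₀) - (l - 1 / ((i : ℝ) + 1)) * n) ∧ 0 < n := fun i =>
    (frequently_high_scores (tendsto_sub_mul_atTop_of_tendsto_div hl
      (sub_lt_self l Nat.one_div_pos_of_nat))).and_eventually (eventually_gt_atTop 0)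
  obtain ⟨φ, hφ, hP⟩ := extraction_forall_of_frequently key
  have hmain : ∀ i, ∀ k : ℕ, 1 ≤ k → k ≤ φ i →
      dist x₀ (f^[φ i] x₀) - dist x₀ (f^[φ i - k] x₀) ≥ (l - 1 / ((i : ℝ) + 1)) * k := by
    intro i k hk hkn
    have h := (hP i).1 (φ i - k) (by omega)
    rw [Nat.cast_sub hkn] at h
    linarith
  refine ⟨φ, fun i => 1 / ((i : ℝ) + 1), hφ, fun i => (hP i).2, fun i => Nat.one_div_pos_of_nat,
    fun i j hij => Nat.one_div_le_one_div hij, tendsto_one_div_add_atTop_nhds_zero_nat, hmain,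
    fun i => ?_⟩
  have h := hmain i 1 le_rfl (hP i).2
  rw [Nat.cast_one, mul_one] at h
  linarith
end
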